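/- Part (7) of Lemma 5: 4·(1 + η₁ + 2η₀ + 3η₃)·(1 + η₃ + 2η₂ + 3η₁) ≡ 2(1+4y)·H + 5p + 1 (mod (4^p − 1)/3). -/

import Mathlib

open Finset

/-- The cyclotomic class `D_i` of order 4 modulo `p` with respect to the
primitive root `θ`: `{θ^(i+4j) mod p : 0 ≤ j < (p-1)/4}`. -/
def cycD (p θ i : ℕ) : Finset ℕ :=
  (Finset.range ((p - 1) / 4)).image fun j => θ ^ (i + 4 * j) % p

/-- `η_i = Σ_{t ∈ D_i} 4^t` as an integer. -/
def eta4 (p θ : ℕ) (i : ℕ) : ℤ := ∑ t ∈ cycD p θ i, (4 : ℤ) ^ t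

/-- `H = η₀ + η₂ − η₁ − η₃`. -/
def Hval (p θ : ℕ) : ℤ := eta4 p θ 0 + eta4 p θ 2 - eta4 p θ 1 - eta4 p θ 3

/- Let `χ` be the character of order 4 of `ZMod p` with `χ θ = I`. By orthogonality, the Gaussian
periods of order 4 are combinations of the Gauss sums of the powers of `χ`, and the cyclotomic number
`(0, 1)` is a combination of their Jacobi sums. All products of these Gauss sums that occur are
determined by `J = jacobiSum χ χ`, so the asserted identity between periods holds at every primitive
`p`-th root of unity with `J.im` in place of `2 * y`. The norm equation `p = J.re ^ 2 + J.im ^ 2` and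
the value of `(0, 1)` force `J.im = 2 * y`. Finally, an integer polynomial vanishing at a primitive
`p`-th root of unity is a multiple of `1 + X + ⋯ + X ^ (p - 1)`, whose value at `4` is
`(4 ^ p - 1) / 3`. -/

/-- The Gaussian period of `χ` with respect to the additive character `ψ`: the sum of `ψ` over the
cyclotomic class on which `χ` takes the value `c`. -/
def gaussPeriod {F R : Type*} [CommRing F] [Fintype F] [CommRing R] [DecidableEq R]
    (χ : MulChar F R) (ψ : AddChar F R) (c : R) : R := ∑ u with χ u = c, ψ u

/-- The cyclotomic number counting the `u` in the class `χ = c` whose successor `u + 1` lies in the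
class `χ = d`; the classes are indexed by the values of `χ`. -/
def cyclotomicNumber {F R : Type*} [CommRing F] [Fintype F] [CommRing R] [DecidableEq R]
    (χ : MulChar F R) (c d : R) : ℕ := #{u | χ u = c ∧ χ (u + 1) = d}

section Orthogonality

variable {F R K : Type*} [Field F] [Fintype F] [CommRing R] [Field K] [DecidableEq K]

lemma gaussSum_pow_eq_sum_gaussPeriod [IsDomain R] [DecidableEq R] {χ : MulChar F R} {n : ℕ}
    [NeZero n] (hχ : χ ^ n = 1) {μ : R} (hμ : IsPrimitiveRoot μ n) (ψ : AddChar F R) (m : ℕ) :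
    gaussSum (χ ^ m) ψ = ∑ k ∈ range n, (μ ^ k) ^ m * gaussPeriod χ ψ (μ ^ k) := by
  simp_rw [gaussPeriod, sum_filter, mul_sum]
  rw [sum_comm, gaussSum]
  refine sum_congr rfl fun u _ ↦ ?_
  rcases eq_or_ne u 0 with rfl | hu
  · have hμ0 (k : ℕ) : 0 ≠ μ ^ k := (pow_ne_zero k (hμ.ne_zero (NeZero.ne n))).symm
    simp [MulChar.map_zero, hμ0]
  obtain ⟨k, hk, hku⟩ := MulChar.exists_apply_eq_pow hχ hμ hu
  have pow_apply : (χ ^ m) u = χ u ^ m := MulChar.pow_apply_coe χ m (Units.mk0 u hu)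
  rw [sum_eq_single_of_mem k (mem_range.2 hk), if_pos hku, pow_apply, hku]
  intro l hl hlk
  rw [hku, if_neg fun h ↦ hlk (hμ.pow_inj (mem_range.1 hl) hk h.symm), mul_zero]

omit [Fintype F] in
lemma sum_inv_pow_mul_mulChar_pow_apply {χ : MulChar F K} {n : ℕ} [NeZero n] (hχ : χ ^ n = 1)
    {c : K} (hc : c ^ n = 1) (u : F) :
    ∑ m ∈ range n, c⁻¹ ^ m * (χ ^ m) u = if χ u = c then (n : K) else 0 := by
  have hc0 : c ≠ 0 := by rintro rfl; simp [NeZero.ne n] at hc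
  rcases eq_or_ne u 0 with rfl | hu
  · simp [MulChar.map_zero, hc0.symm]
  have pow_apply (m : ℕ) : (χ ^ m) u = χ u ^ m := MulChar.pow_apply_coe χ m (Units.mk0 u hu)
  have hw : (c⁻¹ * χ u) ^ n = 1 := by
    rw [mul_pow, inv_pow, hc, ← pow_apply, hχ, MulChar.one_apply (IsUnit.mk0 u hu)]
    simp
  simp only [pow_apply, ← mul_pow]
  split_ifs with h
  · simp [h, hc0]
  · have hw1 : c⁻¹ * χ u - 1 ≠ 0 := by
      rwa [sub_ne_zero, ne_eq, inv_mul_eq_one₀ hc0, eq_comm]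
    simpa [hw, hw1] using geom_sum_mul (c⁻¹ * χ u) n

lemma sum_mulChar_apply_mul_apply_add_one (χ φ : MulChar F R) :
    ∑ u, χ u * φ (u + 1) = χ (-1) * jacobiSum χ φ := by
  rw [← Equiv.sum_comp (Equiv.neg F), jacobiSum, mul_sum]
  refine sum_congr rfl fun u _ ↦ ?_
  rw [Equiv.neg_apply, ← neg_one_mul u, map_mul, neg_one_mul, neg_add_eq_sub, mul_assoc]

lemma natCast_sq_mul_cyclotomicNumber {χ : MulChar F K} {n : ℕ} [NeZero n] (hχ : χ ^ n = 1)
    {c d : K} (hc : c ^ n = 1) (hd : d ^ n = 1) :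
    (n : K) ^ 2 * cyclotomicNumber χ c d =
      ∑ l ∈ range n, ∑ m ∈ range n,
        c⁻¹ ^ l * d⁻¹ ^ m * ((χ ^ l) (-1) * jacobiSum (χ ^ l) (χ ^ m)) := by
  calc (n : K) ^ 2 * cyclotomicNumber χ c d
    _ = ∑ u, (if χ u = c then (n : K) else 0) * (if χ (u + 1) = d then (n : K) else 0) := by
      simp_rw [cyclotomicNumber, card_filter, Nat.cast_sum, mul_sum, ite_zero_mul_ite_zero]
      exact sum_congr rfl fun u _ ↦ by split_ifs <;> simp [sq]
    _ = ∑ u, ∑ l ∈ range n, ∑ m ∈ range n,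
          c⁻¹ ^ l * d⁻¹ ^ m * ((χ ^ l) u * (χ ^ m) (u + 1)) := by
      simp_rw [← sum_inv_pow_mul_mulChar_pow_apply hχ hc,
        ← sum_inv_pow_mul_mulChar_pow_apply hχ hd, sum_mul_sum, mul_mul_mul_comm]
    _ = _ := by
      rw [sum_comm]
      refine sum_congr rfl fun l _ ↦ ?_
      rw [sum_comm]
      refine sum_congr rfl fun m _ ↦ ?_
      rw [← mul_sum, sum_mulChar_apply_mul_apply_add_one]

end Orthogonality

section OrderFour

variable {G : Type*} [Group G] {g : G}

lemma pow_four_eq_one_of_orderOf_eq_four (hg : orderOf g = 4) : g ^ 4 = 1 :=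
  orderOf_dvd_iff_pow_eq_one.1 hg.dvd

lemma ne_one_of_orderOf_eq_four (hg : orderOf g = 4) : g ≠ 1 := by
  rintro rfl
  simp at hg

lemma sq_ne_one_of_orderOf_eq_four (hg : orderOf g = 4) : g ^ 2 ≠ 1 :=
  pow_ne_one_of_lt_orderOf two_ne_zero (by lia)

lemma inv_eq_pow_three_of_orderOf_eq_four (hg : orderOf g = 4) : g⁻¹ = g ^ 3 :=
  inv_eq_of_mul_eq_one_right <| by rw [← pow_succ', pow_four_eq_one_of_orderOf_eq_four hg]

lemma inv_sq_of_orderOf_eq_four (hg : orderOf g = 4) : g⁻¹ ^ 2 = g ^ 2 := by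
  rw [inv_pow]
  exact inv_eq_of_mul_eq_one_right <| by
    rw [← pow_add, pow_four_eq_one_of_orderOf_eq_four hg]

end OrderFour

section QuarticGaussSum

variable {F R : Type*} [Field F] [Fintype F] [CommRing R]

lemma gaussSum_mul_gaussSum_inv_eq [IsDomain R] {χ : MulChar F R} (hχ : χ ≠ 1) {ψ : AddChar F R}
    (hψ : ψ.IsPrimitive) : gaussSum χ ψ * gaussSum χ⁻¹ ψ = χ (-1) * Fintype.card F := by
  have hinv : χ⁻¹ (-1) = χ (-1) := by rw [MulChar.inv_apply', inv_neg_one]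
  rw [← mul_gaussSum_inv_eq_gaussSum χ⁻¹ ψ, hinv, ← gaussSum_mul_gaussSum_eq_card hχ hψ]
  ring

omit [Fintype F] in
lemma mulChar_apply_neg_one_sq (χ : MulChar F R) : χ (-1) ^ 2 = 1 := by
  rw [← map_pow, neg_one_sq, map_one]

lemma gaussSum_sq_eq_jacobiSum_mul [IsDomain R] {χ : MulChar F R} (hχ : χ ^ 2 ≠ 1)
    (ψ : AddChar F R) :
    gaussSum χ ψ ^ 2 = jacobiSum χ χ * gaussSum (χ ^ 2) ψ := by
  rw [sq χ] at hχ ⊢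
  rw [mul_comm, jacobiSum_mul_nontrivial hχ, sq]

lemma gaussSum_sq_sq [IsDomain R] {χ : MulChar F R} (hχ : orderOf χ = 4) {ψ : AddChar F R}
    (hψ : ψ.IsPrimitive) :
    gaussSum (χ ^ 2) ψ ^ 2 = Fintype.card F := by
  have hquad : (χ ^ 2).IsQuadratic :=
    MulChar.isQuadratic_iff_sq_eq_one.2 <| by
      rw [← pow_mul, pow_four_eq_one_of_orderOf_eq_four hχ]
  rw [gaussSum_sq (sq_ne_one_of_orderOf_eq_four hχ) hquad hψ, MulChar.pow_apply' χ two_ne_zero,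
    mulChar_apply_neg_one_sq, one_mul]

end QuarticGaussSum

section QuarticCharacter

open Complex

variable {F : Type*} [Field F] [Fintype F]

lemma star_jacobiSum (χ φ : MulChar F ℂ) : star (jacobiSum χ φ) = jacobiSum χ⁻¹ φ⁻¹ := by
  simp only [jacobiSum, star_sum, star_mul', MulChar.star_apply']

lemma exists_gaussianInt_eq_jacobiSum {χ φ : MulChar F ℂ} (hχ : χ ^ 4 = 1) (hφ : φ ^ 4 = 1) :
    ∃ z : GaussianInt, (z : ℂ) = jacobiSum χ φ := by
  have hle : Algebra.adjoin ℤ {I} ≤ GaussianInt.toComplex.toIntAlgHom.range :=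
    Algebra.adjoin_le <| Set.singleton_subset_iff.2
      ⟨⟨0, 1⟩, by simp [GaussianInt.toComplex_def]⟩
  exact hle (jacobiSum_mem_algebraAdjoin_of_pow_eq_one hχ hφ isPrimitiveRoot_I)

variable {χ : MulChar F ℂ}

lemma jacobiSum_self_sq (hχ : orderOf χ = 4) :
    jacobiSum χ (χ ^ 2) = χ (-1) * jacobiSum χ χ := by
  set ψ := AddChar.FiniteField.primitiveChar_to_Complex F
  have hψ : ψ.IsPrimitive := AddChar.FiniteField.primitiveChar_to_Complex_isPrimitive F
  have h1 := ne_one_of_orderOf_eq_four hχ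
  have hinv : χ * χ ^ 2 = χ⁻¹ := by rw [← pow_succ', inv_eq_pow_three_of_orderOf_eq_four hχ]
  have hmul := jacobiSum_mul_nontrivial (hinv ▸ inv_ne_one.2 h1) ψ
  rw [hinv] at hmul
  have hq : χ (-1) * (Fintype.card F : ℂ) ≠ 0 :=
    mul_ne_zero (isUnit_neg_one.map χ).ne_zero (Nat.cast_ne_zero.2 Fintype.card_ne_zero)
  refine mul_left_cancel₀ hq ?_
  calc χ (-1) * Fintype.card F * jacobiSum χ (χ ^ 2)
    _ = gaussSum χ ψ * (gaussSum χ⁻¹ ψ * jacobiSum χ (χ ^ 2)) := by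
      rw [← gaussSum_mul_gaussSum_inv_eq h1 hψ, mul_assoc]
    _ = gaussSum χ ψ ^ 2 * gaussSum (χ ^ 2) ψ := by rw [hmul]; ring
    _ = jacobiSum χ χ * gaussSum (χ ^ 2) ψ ^ 2 := by
      rw [gaussSum_sq_eq_jacobiSum_mul (sq_ne_one_of_orderOf_eq_four hχ)]; ring
    _ = χ (-1) ^ 2 * Fintype.card F * jacobiSum χ χ := by
      rw [gaussSum_sq_sq hχ hψ, mulChar_apply_neg_one_sq]; ring
    _ = _ := by ring

lemma re_sq_add_im_sq_jacobiSum_self (hχ : χ ^ 2 ≠ 1) :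
    (jacobiSum χ χ).re ^ 2 + (jacobiSum χ χ).im ^ 2 = Fintype.card F := by
  have h1 : χ ≠ 1 := by rintro rfl; simp at hχ
  have hchar : ringChar ℂ ≠ ringChar F := by
    rw [ringChar.eq_zero]
    exact (CharP.ringChar_ne_zero_of_finite F).symm
  have h := jacobiSum_mul_jacobiSum_inv hchar h1 h1 (sq χ ▸ hχ)
  rw [← star_jacobiSum, star_def, mul_conj, normSq_apply] at h
  rw [sq, sq]
  exact_mod_cast h

lemma sixteen_mul_cyclotomicNumber_one_I_eq_jacobiSum (hχ : orderOf χ = 4)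
    (hneg : χ (-1) = -1) :
    16 * (cyclotomicNumber χ 1 I : ℂ) = Fintype.card F + 1
      - (jacobiSum χ χ + star (jacobiSum χ χ))
      + 2 * I * (jacobiSum χ χ - star (jacobiSum χ χ)) := by
  have h4 := pow_four_eq_one_of_orderOf_eq_four hχ
  have h1 := ne_one_of_orderOf_eq_four hχ
  have h2 := sq_ne_one_of_orderOf_eq_four hχ
  have hsq := inv_sq_of_orderOf_eq_four hχ
  have hinv : χ⁻¹ (-1) = -1 := by rw [MulChar.inv_apply', inv_neg_one, hneg]
  have hsqneg : (χ ^ 2) (-1) = 1 := by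
    rw [MulChar.pow_apply' χ two_ne_zero, mulChar_apply_neg_one_sq]
  have j12 : jacobiSum χ (χ ^ 2) = -jacobiSum χ χ := by rw [jacobiSum_self_sq hχ, hneg]; ring
  have j32 : jacobiSum χ⁻¹ (χ ^ 2) = -star (jacobiSum χ χ) := by
    rw [← hsq, jacobiSum_self_sq ((orderOf_inv χ).trans hχ), hinv, star_jacobiSum]; ring
  have j22 : jacobiSum (χ ^ 2) (χ ^ 2) = -1 := by
    have h := jacobiSum_nontrivial_inv h2
    rwa [← inv_pow, hsq, hsqneg] at h
  have neg_I_sq : (-I) ^ 2 = -1 := by rw [neg_sq, I_sq]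
  have neg_I_cube : (-I) ^ 3 = I := by rw [pow_succ, neg_I_sq, neg_one_mul, neg_neg]
  have hN := natCast_sq_mul_cyclotomicNumber (c := 1) h4 (one_pow 4) I_pow_four
  simp only [sum_range_succ, sum_range_zero, pow_zero, pow_one,
    ← inv_eq_pow_three_of_orderOf_eq_four hχ, jacobiSum_comm _ (1 : MulChar F ℂ),
    jacobiSum_comm (χ ^ 2) χ, jacobiSum_comm χ⁻¹ χ, jacobiSum_comm (χ ^ 2) χ⁻¹,
    jacobiSum_one_one, jacobiSum_one_nontrivial h1, jacobiSum_one_nontrivial h2,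
    jacobiSum_one_nontrivial (inv_ne_one.2 h1), jacobiSum_nontrivial_inv h1, j12, j32, j22,
    ← star_jacobiSum χ χ, hsqneg, hneg, hinv, MulChar.one_apply isUnit_neg_one,
    inv_I, neg_I_sq, neg_I_cube, inv_one, one_pow] at hN
  push_cast at hN
  linear_combination hN

lemma sixteen_mul_cyclotomicNumber_one_I_eq_re_im (hχ : orderOf χ = 4) (hneg : χ (-1) = -1) :
    16 * (cyclotomicNumber χ 1 I : ℝ) =
      Fintype.card F + 1 - 2 * (jacobiSum χ χ).re - 4 * (jacobiSum χ χ).im := by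
  have hadd : jacobiSum χ χ + star (jacobiSum χ χ) = 2 * (jacobiSum χ χ).re := by
    simpa using add_conj (jacobiSum χ χ)
  have hsub : jacobiSum χ χ - star (jacobiSum χ χ) = 2 * (jacobiSum χ χ).im * I := by
    simpa using sub_conj (jacobiSum χ χ)
  have hN := sixteen_mul_cyclotomicNumber_one_I_eq_jacobiSum hχ hneg
  rw [hadd, hsub] at hN
  have hN' : 16 * (cyclotomicNumber χ 1 I : ℂ) =
      Fintype.card F + 1 - 2 * (jacobiSum χ χ).re - 4 * (jacobiSum χ χ).im := by
    linear_combination hN + 4 * (jacobiSum χ χ).im * I_sq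
  exact_mod_cast hN'

lemma gaussSum_pow_eq_gaussPeriod_of_orderOf_eq_four (hχ : orderOf χ = 4) (ψ : AddChar F ℂ)
    (m : ℕ) :
    gaussSum (χ ^ m) ψ = gaussPeriod χ ψ 1 + I ^ m * gaussPeriod χ ψ I
      + (-1) ^ m * gaussPeriod χ ψ (-1) + (-I) ^ m * gaussPeriod χ ψ (-I) := by
  rw [gaussSum_pow_eq_sum_gaussPeriod (pow_four_eq_one_of_orderOf_eq_four hχ) isPrimitiveRoot_I]
  simp [sum_range_succ]

lemma gaussPeriod_sum_eq_neg_one (hχ : orderOf χ = 4) {ψ : AddChar F ℂ} (hψ : ψ ≠ 1) :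
    gaussPeriod χ ψ 1 + gaussPeriod χ ψ I + gaussPeriod χ ψ (-1) + gaussPeriod χ ψ (-I) = -1 := by
  have h := gaussSum_pow_eq_gaussPeriod_of_orderOf_eq_four hχ ψ 0
  rw [pow_zero, gaussSum_one_left hψ] at h
  linear_combination -h

lemma gaussSum_eq_gaussPeriod (hχ : orderOf χ = 4) (ψ : AddChar F ℂ) :
    gaussSum χ ψ = (gaussPeriod χ ψ 1 - gaussPeriod χ ψ (-1))
      + I * (gaussPeriod χ ψ I - gaussPeriod χ ψ (-I)) := by
  have h := gaussSum_pow_eq_gaussPeriod_of_orderOf_eq_four hχ ψ 1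
  rw [pow_one] at h
  linear_combination h

lemma gaussSum_sq_eq_gaussPeriod (hχ : orderOf χ = 4) (ψ : AddChar F ℂ) :
    gaussSum (χ ^ 2) ψ = gaussPeriod χ ψ 1 + gaussPeriod χ ψ (-1)
      - gaussPeriod χ ψ I - gaussPeriod χ ψ (-I) := by
  rw [gaussSum_pow_eq_gaussPeriod_of_orderOf_eq_four hχ, neg_sq I, I_sq]
  ring

lemma gaussSum_inv_eq_gaussPeriod (hχ : orderOf χ = 4) (ψ : AddChar F ℂ) :
    gaussSum χ⁻¹ ψ = (gaussPeriod χ ψ 1 - gaussPeriod χ ψ (-1))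
      - I * (gaussPeriod χ ψ I - gaussPeriod χ ψ (-I)) := by
  rw [inv_eq_pow_three_of_orderOf_eq_four hχ, gaussSum_pow_eq_gaussPeriod_of_orderOf_eq_four hχ,
    Odd.neg_pow (by decide), Odd.neg_pow (by decide), I_pow_three]
  ring

lemma gaussPeriod_sub_sq_add_sub_sq (hχ : orderOf χ = 4) {ψ : AddChar F ℂ} (hψ : ψ.IsPrimitive) :
    (gaussPeriod χ ψ 1 - gaussPeriod χ ψ (-1)) ^ 2 + (gaussPeriod χ ψ I - gaussPeriod χ ψ (-I)) ^ 2
      = χ (-1) * Fintype.card F := by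
  rw [← gaussSum_mul_gaussSum_inv_eq (ne_one_of_orderOf_eq_four hχ) hψ,
    gaussSum_eq_gaussPeriod hχ, gaussSum_inv_eq_gaussPeriod hχ]
  linear_combination (gaussPeriod χ ψ I - gaussPeriod χ ψ (-I)) ^ 2 * I_sq

lemma two_mul_gaussPeriod_sub_mul_sub (hχ : orderOf χ = 4) (ψ : AddChar F ℂ) :
    2 * (gaussPeriod χ ψ 1 - gaussPeriod χ ψ (-1)) * (gaussPeriod χ ψ I - gaussPeriod χ ψ (-I)) =
      (jacobiSum χ χ).im * gaussSum (χ ^ 2) ψ := by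
  have hsq := gaussSum_sq_eq_jacobiSum_mul (sq_ne_one_of_orderOf_eq_four hχ) ψ
  have hinv_sq : gaussSum χ⁻¹ ψ ^ 2 = star (jacobiSum χ χ) * gaussSum (χ ^ 2) ψ := by
    have h := inv_sq_of_orderOf_eq_four hχ
    rw [gaussSum_sq_eq_jacobiSum_mul (h ▸ sq_ne_one_of_orderOf_eq_four hχ), h, star_jacobiSum]
  have him : jacobiSum χ χ - star (jacobiSum χ χ) = 2 * (jacobiSum χ χ).im * I := by
    simpa using sub_conj (jacobiSum χ χ)
  rw [gaussSum_eq_gaussPeriod hχ] at hsq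
  rw [gaussSum_inv_eq_gaussPeriod hχ] at hinv_sq
  refine mul_left_cancel₀ (mul_ne_zero two_ne_zero I_ne_zero) ?_
  linear_combination hsq - hinv_sq + gaussSum (χ ^ 2) ψ * him

lemma four_mul_gaussPeriod_mul_eq (hχ : orderOf χ = 4) (hneg : χ (-1) = -1) {ψ : AddChar F ℂ}
    (hψ : ψ.IsPrimitive) :
    4 * (1 + gaussPeriod χ ψ I + 2 * gaussPeriod χ ψ 1 + 3 * gaussPeriod χ ψ (-I))
        * (1 + gaussPeriod χ ψ (-I) + 2 * gaussPeriod χ ψ (-1) + 3 * gaussPeriod χ ψ I) =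
      2 * (1 + 2 * (jacobiSum χ χ).im) * (gaussPeriod χ ψ 1 + gaussPeriod χ ψ (-1)
        - gaussPeriod χ ψ I - gaussPeriod χ ψ (-I)) + 5 * Fintype.card F + 1 := by
  have hψ1 : ψ ≠ 1 := by
    rintro rfl
    exact hψ one_ne_zero (by ext; simp)
  have hsum := gaussPeriod_sum_eq_neg_one hχ hψ1
  have hsub_sq := gaussPeriod_sub_sq_add_sub_sq hχ hψ
  have hsub_mul := two_mul_gaussPeriod_sub_mul_sub hχ ψ
  have hH_sq := gaussSum_sq_sq hχ hψ
  rw [← gaussSum_sq_eq_gaussPeriod hχ]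
  set H := gaussSum (χ ^ 2) ψ with hH
  rw [gaussSum_sq_eq_gaussPeriod hχ] at hH
  set u := gaussPeriod χ ψ 1 - gaussPeriod χ ψ (-1) with hu
  set v := gaussPeriod χ ψ I - gaussPeriod χ ψ (-I) with hv
  have hleft : 2 * (1 + gaussPeriod χ ψ I + 2 * gaussPeriod χ ψ 1 + 3 * gaussPeriod χ ψ (-I)) =
      2 * (u - v) - (1 + H) := by
    linear_combination 3 * hsum + hH - 2 * hu + 2 * hv
  have hright : 2 * (1 + gaussPeriod χ ψ (-I) + 2 * gaussPeriod χ ψ (-1) + 3 * gaussPeriod χ ψ I) =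
      -2 * (u - v) - (1 + H) := by
    linear_combination 3 * hsum + hH + 2 * hu - 2 * hv
  calc _ = (2 * (u - v) - (1 + H)) * (-2 * (u - v) - (1 + H)) := by rw [← hleft, ← hright]; ring
    _ = (1 + H) ^ 2 - 4 * (u ^ 2 + v ^ 2) + 4 * (2 * u * v) := by ring
    _ = _ := by
      rw [hsub_sq, hsub_mul, hneg]
      linear_combination hH_sq

end QuarticCharacter

section CyclotomicClass

variable {F R : Type*} [Field F] [Fintype F] {θ : F}

lemma units_mem_zpowers_of_isPrimitiveRoot {g : Fˣ}
    (hg : IsPrimitiveRoot (g : F) (Fintype.card F - 1)) (u : Fˣ) : u ∈ Subgroup.zpowers g := by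
  have : NeZero (Fintype.card F - 1) := ⟨by have := Fintype.one_lt_card (α := F); lia⟩
  rw [(IsPrimitiveRoot.coe_units_iff.1 hg).zpowers_eq, mem_rootsOfUnity]
  ext
  simpa using FiniteField.pow_card_sub_one_eq_one (u : F) u.ne_zero

lemma exists_mulChar_apply_eq [CommRing R] (hθ : IsPrimitiveRoot θ (Fintype.card F - 1)) {μ : R}
    (hμ : μ ^ (Fintype.card F - 1) = 1) : ∃ χ : MulChar F R, χ θ = μ := by
  classical
  have hn : Fintype.card F - 1 ≠ 0 := by have := Fintype.one_lt_card (α := F); lia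
  lift θ to Fˣ using hθ.isUnit hn
  lift μ to Rˣ using IsUnit.of_pow_eq_one hμ hn
  have hμ' : μ ∈ rootsOfUnity (Fintype.card Fˣ) R := by
    rw [mem_rootsOfUnity, Fintype.card_units]
    exact Units.ext (by simpa using hμ)
  exact ⟨_, MulChar.ofRootOfUnity_spec hμ' (units_mem_zpowers_of_isPrimitiveRoot hθ)⟩

lemma orderOf_mulChar_eq_orderOf_apply [CommRing R] (hθ : IsPrimitiveRoot θ (Fintype.card F - 1))
    (χ : MulChar F R) : orderOf χ = orderOf (χ θ) := by
  have hn : Fintype.card F - 1 ≠ 0 := by have := Fintype.one_lt_card (α := F); lia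
  lift θ to Fˣ using hθ.isUnit hn
  rw [orderOf_eq_orderOf_iff]
  intro k
  rw [MulChar.eq_iff (units_mem_zpowers_of_isPrimitiveRoot hθ), MulChar.pow_apply_coe,
    MulChar.one_apply_coe]

lemma mulChar_apply_neg_one_eq_neg_one [CommRing R] [IsDomain R] (hF : Fintype.card F % 8 = 5)
    (hθ : IsPrimitiveRoot θ (Fintype.card F - 1)) {χ : MulChar F R}
    (hχ : IsPrimitiveRoot (χ θ) 4) : χ (-1) = -1 := by
  obtain ⟨k, hk⟩ : ∃ k, Fintype.card F - 1 = (4 * k + 2) * 2 :=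
    ⟨Fintype.card F / 8, by lia⟩
  have hneg : θ ^ (4 * k + 2) = -1 := (hθ.pow (by lia) hk).eq_neg_one_of_two_right
  have hsq : χ θ ^ 2 = -1 := (hχ.pow four_pos (by norm_num)).eq_neg_one_of_two_right
  rw [← hneg, map_pow, pow_add, pow_mul, hχ.pow_eq_one, one_pow, one_mul, hsq]

end CyclotomicClass

section CycD

variable {p θ : ℕ} [Fact p.Prime]

lemma mem_cycD_iff {R : Type*} [CommRing R] [Nontrivial R] (hp : p % 4 = 1)
    (hθ : IsPrimitiveRoot (θ : ZMod p) (p - 1)) {χ : MulChar (ZMod p) R}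
    (hχ : IsPrimitiveRoot (χ θ) 4) {i t : ℕ} (hi : i < 4) :
    t ∈ cycD p θ i ↔ t < p ∧ χ t = χ θ ^ i := by
  have hp1 := (Fact.out : p.Prime).one_lt
  simp only [cycD, mem_image, mem_range]
  constructor
  · rintro ⟨j, -, rfl⟩
    refine ⟨Nat.mod_lt _ (by lia), ?_⟩
    rw [ZMod.natCast_mod, Nat.cast_pow, map_pow, pow_add, pow_mul, hχ.pow_eq_one, one_pow, mul_one]
  · rintro ⟨ht, htχ⟩
    have ht0 : (t : ZMod p) ≠ 0 := by
      intro h0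
      rw [h0, MulChar.map_zero] at htχ
      exact (hχ.isUnit four_ne_zero).pow i |>.ne_zero htχ.symm
    have : NeZero (p - 1) := ⟨by lia⟩
    obtain ⟨k, hk, hkt⟩ := hθ.eq_pow_of_pow_eq_one (ZMod.pow_card_sub_one_eq_one ht0)
    have hki : k % 4 = i := by
      rw [← hkt, map_pow, ← pow_mod_orderOf, ← hχ.eq_orderOf] at htχ
      exact hχ.pow_inj (Nat.mod_lt k four_pos) hi htχ
    refine ⟨k / 4, by lia, ?_⟩
    rw [← hki, Nat.mod_add_div, ← Nat.mod_eq_of_lt ht]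
    exact (ZMod.natCast_eq_natCast_iff' _ _ _).1 (by exact_mod_cast hkt)

lemma sum_cycD {R M : Type*} [CommRing R] [Nontrivial R] [DecidableEq R] [AddCommMonoid M]
    (hp : p % 4 = 1) (hθ : IsPrimitiveRoot (θ : ZMod p) (p - 1)) {χ : MulChar (ZMod p) R}
    (hχ : IsPrimitiveRoot (χ θ) 4) {i : ℕ} (hi : i < 4) (f : ZMod p → M) :
    ∑ t ∈ cycD p θ i, f t = ∑ u with χ u = χ θ ^ i, f u := by
  refine sum_nbij' (fun t ↦ (t : ZMod p)) ZMod.val ?_ ?_ ?_ ?_ fun _ _ ↦ rfl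
  · intro t ht
    simpa using ((mem_cycD_iff hp hθ hχ hi).1 ht).2
  · intro u hu
    exact (mem_cycD_iff hp hθ hχ hi).2 ⟨ZMod.val_lt u, by simpa using hu⟩
  · intro t ht
    exact ZMod.val_cast_of_lt ((mem_cycD_iff hp hθ hχ hi).1 ht).1
  · intro u _
    exact ZMod.natCast_zmod_val u

lemma card_filter_cycD_eq_cyclotomicNumber {K : Type*} [Field K] [DecidableEq K] (hp : p % 4 = 1)
    (hθ : IsPrimitiveRoot (θ : ZMod p) (p - 1)) {χ : MulChar (ZMod p) K}
    (hχ : IsPrimitiveRoot (χ θ) 4) {i j : ℕ} (hi : i < 4) (hj : j < 4) :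
    #{a ∈ cycD p θ i | (a + 1) % p ∈ cycD p θ j} =
      cyclotomicNumber χ (χ θ ^ i) (χ θ ^ j) := by
  have hsucc (a : ℕ) : (a + 1) % p ∈ cycD p θ j ↔ χ ((a : ZMod p) + 1) = χ θ ^ j := by
    rw [mem_cycD_iff hp hθ hχ hj, ZMod.natCast_mod, Nat.cast_succ]
    exact and_iff_right (Nat.mod_lt _ (Fact.out : p.Prime).pos)
  simp_rw [card_filter, hsucc, cyclotomicNumber]
  rw [sum_cycD hp hθ hχ hi fun u ↦ if χ (u + 1) = χ θ ^ j then 1 else 0, ← card_filter,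
    filter_filter]

end CycD

/-- The Gaussian period `η_i` with `4` replaced by an arbitrary base `g`. -/
def cycPeriod {R : Type*} [Semiring R] (p θ : ℕ) (g : R) (i : ℕ) : R := ∑ t ∈ cycD p θ i, g ^ t

lemma aeval_cycPeriod_X {A R : Type*} [CommSemiring A] [Semiring R] [Algebra A R] (p θ : ℕ) (g : R)
    (i : ℕ) : Polynomial.aeval g (cycPeriod p θ (Polynomial.X : Polynomial A) i) =
      cycPeriod p θ g i := by
  simp only [cycPeriod, map_sum, map_pow, Polynomial.aeval_X]

lemma cycPeriod_eq_gaussPeriod {p θ : ℕ} [Fact p.Prime] {K : Type*} [Field K] [DecidableEq K]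
    (hp : p % 4 = 1) (hθ : IsPrimitiveRoot (θ : ZMod p) (p - 1)) {χ : MulChar (ZMod p) K}
    (hχ : IsPrimitiveRoot (χ θ) 4) {ζ : K} (hζ : ζ ^ p = 1) {i : ℕ} (hi : i < 4) :
    cycPeriod p θ ζ i = gaussPeriod χ (AddChar.zmodChar p hζ) (χ θ ^ i) := by
  rw [gaussPeriod, ← sum_cycD hp hθ hχ hi, cycPeriod]
  simp only [AddChar.zmodChar_apply']

lemma eq_two_mul_of_sq_add_sq_eq {p : ℕ} (hp : p.Prime) {x y a b : ℤ}
    (hxy : (p : ℤ) = x ^ 2 + 4 * y ^ 2) (hab : (p : ℤ) = a ^ 2 + b ^ 2)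
    (h : a + 2 * b = 4 * y - x) : b = 2 * y := by
  obtain ⟨e, rfl⟩ : ∃ e, b = 2 * y + e := ⟨b - 2 * y, by ring⟩
  obtain rfl : a = -x - 2 * e := by linarith
  have he : e * (5 * e + 4 * (x + y)) = 0 := by linear_combination hab.symm.trans hxy
  rcases mul_eq_zero.1 he with rfl | he
  · rw [add_zero]
  obtain ⟨k, hk⟩ : (5 : ℤ) ∣ x + y := by lia
  obtain rfl : p = 5 := by
    have h5 : (5 : ℤ) ∣ p := ⟨(x - y) * k + y ^ 2, by linear_combination hxy + (x - y) * hk⟩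
    exact ((Nat.prime_dvd_prime_iff_eq Nat.prime_five hp).1 (by exact_mod_cast h5)).symm
  push_cast at hxy
  obtain ⟨hx1, hx2⟩ : -3 < x ∧ x < 3 := by constructor <;> nlinarith
  obtain ⟨hy1, hy2⟩ : -2 < y ∧ y < 2 := by constructor <;> nlinarith
  have hk0 : k = 0 := by lia
  lia

lemma four_pow_sub_one_ediv_three_eq_geom_sum (n : ℕ) :
    ((4 : ℤ) ^ n - 1) / 3 = ∑ t ∈ range n, 4 ^ t :=
  Int.ediv_eq_of_eq_mul_left three_ne_zero (geom_sum_mul 4 n).symm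

section PrimitiveRoot

open Polynomial

lemma geom_sum_dvd_aeval_of_aeval_eq_zero {p : ℕ} (hp : p.Prime) {K : Type*} [Field K] [CharZero K]
    {ζ : K} (hζ : IsPrimitiveRoot ζ p) {P : ℤ[X]} (hP : aeval ζ P = 0) {R : Type*} [CommRing R]
    (g : R) : ∑ t ∈ range p, g ^ t ∣ aeval g P := by
  have : Fact p.Prime := ⟨hp⟩
  have hdvd : cyclotomic p ℤ ∣ P := by
    rw [cyclotomic_eq_minpoly hζ hp.pos]
    exact minpoly.isIntegrallyClosed_dvd (hζ.isIntegral hp.pos) hP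
  simpa [cyclotomic_prime] using map_dvd (aeval g) hdvd

end PrimitiveRoot

section PrimeModEight

variable {p : ℕ} [Fact p.Prime] {x y : ℤ} {θ : ℕ}

lemma im_jacobiSum_self_eq_two_mul (hp4 : p % 4 = 1) (hxy : (p : ℤ) = x ^ 2 + 4 * y ^ 2)
    (hθ : IsPrimitiveRoot (θ : ZMod p) (p - 1))
    (hy : 16 * (#{a ∈ cycD p θ 0 | (a + 1) % p ∈ cycD p θ 1} : ℤ) = p + 1 + 2 * x - 8 * y)
    {χ : MulChar (ZMod p) ℂ} (hχ : orderOf χ = 4) (hχθ : χ θ = Complex.I) (hneg : χ (-1) = -1) :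
    (jacobiSum χ χ).im = 2 * y := by
  have h4 := pow_four_eq_one_of_orderOf_eq_four hχ
  obtain ⟨z, hz⟩ := exists_gaussianInt_eq_jacobiSum h4 h4
  have hnorm := re_sq_add_im_sq_jacobiSum_self (sq_ne_one_of_orderOf_eq_four hχ)
  have hN := sixteen_mul_cyclotomicNumber_one_I_eq_re_im hχ hneg
  rw [card_filter_cycD_eq_cyclotomicNumber hp4 hθ (hχθ ▸ Complex.isPrimitiveRoot_I)
    four_pos (by norm_num), hχθ, pow_zero, pow_one] at hy
  rw [ZMod.card, ← hz, ← GaussianInt.intCast_re, ← GaussianInt.intCast_im] at hnorm hN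
  rw [← hz, ← GaussianInt.intCast_im]
  norm_cast at hnorm hN ⊢
  refine eq_two_mul_of_sq_add_sq_eq Fact.out hxy (a := z.re) (by exact_mod_cast hnorm.symm) ?_
  have hN' : 16 * (cyclotomicNumber χ 1 Complex.I : ℤ) = p + 1 - 2 * z.re - 4 * z.im := by
    exact_mod_cast hN
  linarith

lemma four_mul_cycPeriod_mul_eq (hp8 : p % 8 = 5) (hxy : (p : ℤ) = x ^ 2 + 4 * y ^ 2)
    (hθ : IsPrimitiveRoot (θ : ZMod p) (p - 1))
    (hy : 16 * (#{a ∈ cycD p θ 0 | (a + 1) % p ∈ cycD p θ 1} : ℤ) = p + 1 + 2 * x - 8 * y)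
    {ζ : ℂ} (hζ : IsPrimitiveRoot ζ p) :
    4 * (1 + cycPeriod p θ ζ 1 + 2 * cycPeriod p θ ζ 0 + 3 * cycPeriod p θ ζ 3)
        * (1 + cycPeriod p θ ζ 3 + 2 * cycPeriod p θ ζ 2 + 3 * cycPeriod p θ ζ 1) =
      2 * (1 + 4 * y) * (cycPeriod p θ ζ 0 + cycPeriod p θ ζ 2 - cycPeriod p θ ζ 1
        - cycPeriod p θ ζ 3) + 5 * p + 1 := by
  have hθF : IsPrimitiveRoot (θ : ZMod p) (Fintype.card (ZMod p) - 1) := by rwa [ZMod.card]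
  obtain ⟨χ, hχθ⟩ : ∃ χ : MulChar (ZMod p) ℂ, χ θ = Complex.I := by
    refine exists_mulChar_apply_eq hθF ?_
    rw [ZMod.card, Complex.isPrimitiveRoot_I.pow_eq_one_iff_dvd]
    lia
  have hχθ4 : IsPrimitiveRoot (χ θ) 4 := hχθ ▸ Complex.isPrimitiveRoot_I
  have hχ : orderOf χ = 4 := (orderOf_mulChar_eq_orderOf_apply hθF χ).trans hχθ4.eq_orderOf.symm
  have hneg : χ (-1) = -1 := mulChar_apply_neg_one_eq_neg_one (by rwa [ZMod.card]) hθF hχθ4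
  have hψ := AddChar.zmodChar_primitive_of_primitive_root p hζ
  have hperiods := four_mul_gaussPeriod_mul_eq hχ hneg hψ
  rw [im_jacobiSum_self_eq_two_mul (by lia) hxy hθ hy hχ hχθ hneg, ZMod.card] at hperiods
  have hcyc {i : ℕ} (hi : i < 4) := cycPeriod_eq_gaussPeriod (by lia) hθ hχθ4 hζ.pow_eq_one hi
  rw [hcyc (i := 0) (by norm_num), hcyc (i := 1) (by norm_num), hcyc (i := 2) (by norm_num),
    hcyc (i := 3) (by norm_num), hχθ, pow_zero, pow_one, Complex.I_sq, Complex.I_pow_three]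
  push_cast at hperiods
  linear_combination hperiods

end PrimeModEight

theorem lemma5_part7_general {R : Type*} [CommRing R] {p : ℕ} (hp : p.Prime) (hp8 : p % 8 = 5)
    {x y : ℤ} (hxy : (p : ℤ) = x ^ 2 + 4 * y ^ 2) {θ : ℕ}
    (hθ : IsPrimitiveRoot (θ : ZMod p) (p - 1))
    (hy : 16 * (#{a ∈ cycD p θ 0 | (a + 1) % p ∈ cycD p θ 1} : ℤ) = p + 1 + 2 * x - 8 * y) (g : R) :
    ∑ t ∈ range p, g ^ t ∣
      2 * (1 + 4 * y) * (cycPeriod p θ g 0 + cycPeriod p θ g 2 - cycPeriod p θ g 1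
          - cycPeriod p θ g 3) + 5 * p + 1
        - 4 * (1 + cycPeriod p θ g 1 + 2 * cycPeriod p θ g 0 + 3 * cycPeriod p θ g 3)
          * (1 + cycPeriod p θ g 3 + 2 * cycPeriod p θ g 2 + 3 * cycPeriod p θ g 1) := by
  have : Fact p.Prime := ⟨hp⟩
  let η : ℕ → Polynomial ℤ := cycPeriod p θ Polynomial.X
  have hζ := Complex.isPrimitiveRoot_exp p hp.ne_zero
  have hP := geom_sum_dvd_aeval_of_aeval_eq_zero hp hζ (g := g)
    (P := 2 * (1 + 4 * (y : Polynomial ℤ)) * (η 0 + η 2 - η 1 - η 3) + 5 * p + 1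
      - 4 * (1 + η 1 + 2 * η 0 + 3 * η 3) * (1 + η 3 + 2 * η 2 + 3 * η 1)) <| by
    simp only [map_sub, map_add, map_mul, map_one, map_ofNat, map_natCast, map_intCast, η,
      aeval_cycPeriod_X]
    exact sub_eq_zero.2 (four_mul_cycPeriod_mul_eq hp8 hxy hθ hy hζ).symm
  simpa only [map_sub, map_add, map_mul, map_one, map_ofNat, map_natCast, map_intCast, η,
    aeval_cycPeriod_X] using hP

theorem lemma5_part7
    (p : ℕ) (hp : p.Prime) (hp8 : p % 8 = 5)
    (x y : ℤ) (hx : x % 4 = 1) (hxy : (p : ℤ) = x ^ 2 + 4 * y ^ 2)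
    (θ : ℕ) (hθ : IsPrimitiveRoot (θ : ZMod p) (p - 1))
    (hy : 16 * (((cycD p θ 0).filter (fun a => (a + 1) % p ∈ cycD p θ 1)).card : ℤ)
        = (p : ℤ) + 1 + 2 * x - 8 * y)
    :
    4 * (1 + eta4 p θ 1 + 2 * eta4 p θ 0 + 3 * eta4 p θ 3) * (1 + eta4 p θ 3 + 2 * eta4 p θ 2 + 3 * eta4 p θ 1)
      ≡ 2 * (1 + 4 * y) * Hval p θ + 5 * (p : ℤ) + 1 [ZMOD ((4 : ℤ) ^ p - 1) / 3] := by
  rw [Int.modEq_iff_dvd, four_pow_sub_one_ediv_three_eq_geom_sum]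
  exact lemma5_part7_general hp hp8 hxy hθ hy (4 : ℤ)
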